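/- Let m, n ≥ 1 be integers. For A ∈ Matrix (Fin m) (Fin n) ℍ let S(A) = {(X,Y) ∈ 𝔲(m) × 𝔰𝔭(n) : (X mapped entrywise into ℍ)·A = A·Y}, regarded as a real vector space. Then the minimum over all A of dim_ℝ S(A) equals: (m−2n)² if n ≥ 2 and m ≥ 2n; (n−m)(2(n−m)+1) if m ≥ 3 and n ≥ m; 1 + (m−2)² if n = 1 and m ≥ 2; 1 + (n−m)(2(n−m)+1) if m ≤ 2 and n ≥ m; and 0 in the remaining cases (that is, when n ≥ 2 and n < m < 2n). (Infinitesimally, the identity component of a principal isotropy group of the action of U(m)×Sp(n) on ℂᵐ ⊗_ℂ ℍⁿ, given by (g,u)·A = (g mapped into ℍ) A u*, is U(m−2n), Sp(n−m), U(1)×U(m−2), U(1)×Sp(n−m), or trivial, in the respective cases.) -/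

import Mathlib

open Matrix Quaternion

/-- `S(A) = {(X,Y) ∈ 𝔲(m) × 𝔰𝔭(n) : X·A = A·Y}`, where the skew-Hermitian complex matrix `X`
is mapped entrywise into the quaternions via the standard embedding `ℂ → ℍ`. -/
def stabSet8 {m n : ℕ} (A : Matrix (Fin m) (Fin n) (Quaternion ℝ)) :
    Set (Matrix (Fin m) (Fin m) ℂ × Matrix (Fin n) (Fin n) (Quaternion ℝ)) :=
  {p | p.1ᴴ = -p.1 ∧ p.2ᴴ = -p.2 ∧
    p.1.map (Quaternion.coeComplex) * A = A * p.2}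

lemma ker_exists {R : Type*} [DivisionRing R] [StarRing R] {n : ℕ} {q : Type*} [Fintype q]
    (A : Matrix (Fin n) q R) (k : ℕ) (hk : k ≤ n - Fintype.card q) :
    ∃ C : Matrix (Fin k) (Fin n) R, C * A = 0 ∧
      ∀ Z : Matrix (Fin k) (Fin k) R, Cᴴ * Z * C = 0 → Z = 0 := by
  classical
  let f : (Fin n → R) →ₗ[R] (q → R) := A.vecMulLinear
  have h1 := f.finrank_range_add_finrank_ker
  have h2 : Module.finrank R (LinearMap.range f) ≤ Fintype.card q := by
    refine (Submodule.finrank_le _).trans (by simp)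
  have h3 : k ≤ Module.finrank R (LinearMap.ker f) := by
    simp at h1; omega
  let b := Module.finBasis R (LinearMap.ker f)
  have hli : LinearIndependent R (fun i : Fin k => ((b (Fin.castLE h3 i)) : Fin n → R)) := by
    have := (b.linearIndependent.map' (Submodule.subtype _) (Submodule.ker_subtype _)).comp
      (Fin.castLE h3) (Fin.castLE_injective h3)
    exact this
  let C : Matrix (Fin k) (Fin n) R := Matrix.of (fun i => ((b (Fin.castLE h3 i)) : Fin n → R))
  have hC : ∀ w : Fin k → R, w ᵥ* C = 0 → w = 0 := by
    intro w hw
    have := Fintype.linearIndependent_iff.1 hli w (by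
      ext j
      have := congrFun hw j
      simpa [Matrix.vecMul, dotProduct, C] using this)
    ext i; exact this i
  have hC2 : ∀ {p : Type} (Z : Matrix p (Fin k) R), Z * C = 0 → Z = 0 := by
    intro p Z hZ
    ext i j
    have := hC (Z i) (by
      ext l
      exact congrFun (congrFun hZ i) l)
    exact congrFun this j
  refine ⟨C, ?_, ?_⟩
  · ext i j
    have := (b (Fin.castLE h3 i)).2
    rw [LinearMap.mem_ker] at this
    exact congrFun this j
  · intro Z hZ
    have h := hC2 _ hZ
    have h' : Zᴴ * C = 0 := by
      have := congrArg Matrix.conjTranspose h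
      simpa using this
    simpa using hC2 _ h'

def stabSub {m n : ℕ} (A : Matrix (Fin m) (Fin n) (Quaternion ℝ)) :
    Submodule ℝ (Matrix (Fin m) (Fin m) ℂ × Matrix (Fin n) (Fin n) (Quaternion ℝ)) where
  carrier := stabSet8 A
  add_mem' := by
    rintro ⟨X, Y⟩ ⟨X', Y'⟩ ⟨h1, h2, h3⟩ ⟨h1', h2', h3'⟩
    simp only at *
    refine ⟨by simp [h1, h1']; abel, by simp [h2, h2']; abel, ?_⟩
    have : (X + X').map (Quaternion.coeComplex) = X.map (Quaternion.coeComplex) + X'.map (Quaternion.coeComplex) := by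
      ext1 i j; simp
    simp [this, Matrix.add_mul, Matrix.mul_add, h3, h3']
  zero_mem' := by
    refine ⟨by simp, by simp, ?_⟩
    have : (0 : Matrix (Fin m) (Fin m) ℂ).map (Quaternion.coeComplex) = 0 := by
      ext1 i j; simp
    simp [this]
  smul_mem' := by
    rintro c ⟨X, Y⟩ ⟨h1, h2, h3⟩
    simp only at *
    refine ⟨by simp [h1], ?_, ?_⟩
    · ext1 i j
      have := congrFun (congrFun h2 i) j
      simp only [conjTranspose_apply, Matrix.neg_apply] at this
      show star (c • Y j i) = - (c • Y i j)
      rw [Quaternion.star_smul, this, smul_neg]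
    have : (c • X).map (Quaternion.coeComplex) = c • X.map (Quaternion.coeComplex) := by
      ext1 i j; simp
    simp [this, h3]

lemma span_stab {m n : ℕ} (A : Matrix (Fin m) (Fin n) (Quaternion ℝ)) :
    Submodule.span ℝ (stabSet8 A) = stabSub A := Submodule.span_eq (stabSub A)


def iotaU (k : ℕ) : Matrix (Fin k) (Fin k) ℝ →ₗ[ℝ] Matrix (Fin k) (Fin k) ℂ where
  toFun M := Matrix.of fun a b => ⟨M a b - M b a, M a b + M b a⟩
  map_add' M N := by
    ext a b; apply Complex.ext <;> simp <;> ring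
  map_smul' c M := by
    ext a b; apply Complex.ext <;> simp <;> ring

lemma iotaU_skew (k : ℕ) (M : Matrix (Fin k) (Fin k) ℝ) : (iotaU k M)ᴴ = - iotaU k M := by
  ext a b; apply Complex.ext <;> simp [iotaU] <;> ring

lemma iotaU_inj (k : ℕ) (M : Matrix (Fin k) (Fin k) ℝ) (h : iotaU k M = 0) : M = 0 := by
  ext a b
  have h1 := congrFun (congrFun h a) b
  have h2 := congrArg Complex.re h1
  have h3 := congrArg Complex.im h1
  simp [iotaU] at h2 h3 ⊢
  linarith

def qmk (a b c d : ℝ) : ℍ[ℝ] := ⟨a, b, c, d⟩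
@[simp] lemma qmk_re (a b c d : ℝ) : (qmk a b c d).re = a := rfl
@[simp] lemma qmk_imI (a b c d : ℝ) : (qmk a b c d).imI = b := rfl
@[simp] lemma qmk_imJ (a b c d : ℝ) : (qmk a b c d).imJ = c := rfl
@[simp] lemma qmk_imK (a b c d : ℝ) : (qmk a b c d).imK = d := rfl

lemma qsum_re {ι : Type*} (s : Finset ι) (f : ι → ℍ[ℝ]) : (∑ x ∈ s, f x).re = ∑ x ∈ s, (f x).re :=
  map_sum (QuaternionAlgebra.reₗ (-1) 0 (-1)) _ _
lemma qsum_imI {ι : Type*} (s : Finset ι) (f : ι → ℍ[ℝ]) : (∑ x ∈ s, f x).imI = ∑ x ∈ s, (f x).imI :=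
  map_sum (QuaternionAlgebra.imIₗ (-1) 0 (-1)) _ _
lemma qsum_imJ {ι : Type*} (s : Finset ι) (f : ι → ℍ[ℝ]) : (∑ x ∈ s, f x).imJ = ∑ x ∈ s, (f x).imJ :=
  map_sum (QuaternionAlgebra.imJₗ (-1) 0 (-1)) _ _
lemma qsum_imK {ι : Type*} (s : Finset ι) (f : ι → ℍ[ℝ]) : (∑ x ∈ s, f x).imK = ∑ x ∈ s, (f x).imK :=
  map_sum (QuaternionAlgebra.imKₗ (-1) 0 (-1)) _ _

abbrev SpC (k : ℕ) := Matrix (Fin k) (Fin k) ℝ × Matrix (Fin k) (Fin k) ℝ × (Fin k → ℝ)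

def iotaS (k : ℕ) : SpC k →ₗ[ℝ] Matrix (Fin k) (Fin k) ℍ[ℝ] where
  toFun p := Matrix.of fun a b => qmk (p.1 a b - p.1 b a) (p.1 a b + p.1 b a) (p.2.1 a b + p.2.1 b a)
    (if a < b then p.2.1 a b - p.2.1 b a else if b < a then p.2.1 b a - p.2.1 a b else p.2.2 a)
  map_add' M N := by
    ext a b
    · simp; ring
    · simp; ring
    · simp; ring
    · simp; split_ifs <;> ring
  map_smul' c M := by
    ext a b
    · simp; ring
    · simp; ring
    · simp; ring
    · simp; split_ifs <;> ring

lemma iotaS_skew (k : ℕ) (p : SpC k) : (iotaS k p)ᴴ = - iotaS k p := by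
  ext a b
  · simp [iotaS]
  · simp [iotaS]; ring
  · simp [iotaS]; ring
  · simp only [iotaS, LinearMap.coe_mk, AddHom.coe_mk, conjTranspose_apply, of_apply, imK_star, Matrix.neg_apply, imK_neg]
    rcases lt_trichotomy a b with h | h | h
    · simp [h, h.le, not_lt.2 h.le]
    · subst h; simp
    · simp [h, not_lt.2 h.le]

lemma iotaS_inj (k : ℕ) (p : SpC k) (h : iotaS k p = 0) : p = 0 := by
  obtain ⟨M, N, d⟩ := p
  have key : ∀ a b, iotaS k (M, N, d) a b = 0 := fun a b => congrFun (congrFun h a) b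
  have e1 := fun a b => congrArg QuaternionAlgebra.re (key a b)
  have e2 := fun a b => congrArg QuaternionAlgebra.imI (key a b)
  have e3 := fun a b => congrArg QuaternionAlgebra.imJ (key a b)
  have e4 := fun a b => congrArg QuaternionAlgebra.imK (key a b)
  simp only [iotaS, LinearMap.coe_mk, AddHom.coe_mk, of_apply] at e1 e2 e3 e4
  simp at e1 e2 e3 e4
  refine Prod.ext ?_ (Prod.ext ?_ ?_)
  · ext a b
    have := e1 a b; have := e2 a b
    simp; linarith
  · ext a b
    have h3 := e3 a b; have h4 := e4 a b
    rcases lt_trichotomy a b with h | h | h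
    · rw [if_pos h] at h4; simp; linarith
    · subst h; simp; linarith
    · rw [if_neg h.not_gt, if_pos h] at h4; simp; linarith
  · ext a
    have := e4 a a
    simpa using this

lemma finrank_SpC (k : ℕ) : Module.finrank ℝ (SpC k) = k * (2 * k + 1) := by
  simp [SpC, Module.finrank_matrix]; ring

lemma map_coe_mul {k m n : ℕ} (B : Matrix (Fin k) (Fin m) ℂ) (C : Matrix (Fin m) (Fin n) ℂ) :
    (B * C).map Quaternion.coeComplex = B.map Quaternion.coeComplex * C.map Quaternion.coeComplex := by
  have := Matrix.map_mul (f := (Quaternion.ofComplex : ℂ →ₐ[ℝ] ℍ[ℝ])) (L := B) (M := C)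
  simpa using this

lemma lower {m n : ℕ} (A : Matrix (Fin m) (Fin n) (Quaternion ℝ)) :
    ∃ U : Submodule ℝ (Matrix (Fin m) (Fin m) ℂ × Matrix (Fin n) (Fin n) (Quaternion ℝ)),
      U ≤ stabSub A ∧
      Module.finrank ℝ U = (m - 2 * n) ^ 2 + (n - m) * (2 * (n - m) + 1) ∧
      (n - m = 0 → ∀ p ∈ U, p.2 = 0) ∧ (m - 2 * n = 0 → ∀ p ∈ U, p.1 = 0) := by
  obtain ⟨C, hC, hC'⟩ := ker_exists Aᴴ (n - m) (by simp)
  let A' : Matrix (Fin m) (Fin n ⊕ Fin n) ℂ := Matrix.of fun i j =>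
    Sum.elim (fun j => (⟨(A i j).re, (A i j).imI⟩ : ℂ)) (fun j => ⟨(A i j).imJ, (A i j).imK⟩) j
  obtain ⟨B, hB, hB'⟩ := ker_exists A' (m - 2 * n) (by simp [two_mul])
  have hBA : B.map Quaternion.coeComplex * A = 0 := by
    ext1 i j
    have h1 := congrFun (congrFun hB i) (Sum.inl j)
    have h2 := congrFun (congrFun hB i) (Sum.inr j)
    simp only [Matrix.mul_apply, A', of_apply, Sum.elim_inl, Sum.elim_inr] at h1 h2
    have h1r := congrArg Complex.re h1
    have h1i := congrArg Complex.im h1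
    have h2r := congrArg Complex.re h2
    have h2i := congrArg Complex.im h2
    simp only [Complex.re_sum, Complex.im_sum, Complex.mul_re, Complex.mul_im, Matrix.zero_apply, Complex.zero_re, Complex.zero_im] at h1r h1i h2r h2i
    simp only [Matrix.mul_apply, map_apply, Matrix.zero_apply]
    apply Quaternion.ext
    · rw [qsum_re]; simpa using h1r
    · rw [qsum_imI]; simpa using h1i
    · rw [qsum_imJ]; simpa [sub_eq_add_neg] using h2r
    · rw [qsum_imK]; simpa using h2i
  have hAC : A * Cᴴ = 0 := by
    have := congrArg Matrix.conjTranspose hC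
    simpa using this
  let F : (Matrix (Fin (m - 2 * n)) (Fin (m - 2 * n)) ℝ × SpC (n - m)) →ₗ[ℝ]
      (Matrix (Fin m) (Fin m) ℂ × Matrix (Fin n) (Fin n) (Quaternion ℝ)) :=
    { toFun := fun p => (Bᴴ * iotaU _ p.1 * B, Cᴴ * iotaS _ p.2 * C)
      map_add' := by
        intro p q
        simp [Matrix.mul_add, Matrix.add_mul]
      map_smul' := by
        intro c p
        simp }
  have hF : Function.Injective F := by
    rw [injective_iff_map_eq_zero]
    rintro ⟨M, N⟩ h
    have h1 : Bᴴ * iotaU _ M * B = 0 := congrArg Prod.fst h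
    have h2 : Cᴴ * iotaS _ N * C = 0 := congrArg Prod.snd h
    rw [iotaU_inj _ _ (hB' _ h1), iotaS_inj _ _ (hC' _ h2)]
    rfl
  refine ⟨LinearMap.range F, ?_, ?_, ?_, ?_⟩
  · rintro _ ⟨⟨M, N⟩, rfl⟩
    refine ⟨?_, ?_, ?_⟩
    · simp [F, iotaU_skew, Matrix.mul_assoc]
    · simp [F, iotaS_skew, Matrix.mul_assoc]
    · simp only [F, LinearMap.coe_mk, AddHom.coe_mk]
      rw [map_coe_mul, Matrix.mul_assoc, hBA, ← Matrix.mul_assoc, ← Matrix.mul_assoc, hAC]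
      simp
  · rw [LinearMap.finrank_range_of_inj hF, Module.finrank_prod, finrank_SpC]
    simp [Module.finrank_matrix]; ring
  · intro h
    rintro _ ⟨⟨M, N⟩, rfl⟩
    have : IsEmpty (Fin (n - m)) := by rw [h]; infer_instance
    have e : iotaS (n - m) N = 0 := by ext1 i j; exact this.elim i
    simp [F, e]
  · intro h
    rintro _ ⟨⟨M, N⟩, rfl⟩
    have : IsEmpty (Fin (m - 2 * n)) := by rw [h]; infer_instance
    have e : iotaU (m - 2 * n) M = 0 := by ext1 i j; exact this.elim i
    simp [F, e]


lemma quad (x : ℝ) (c : ℂ) : ∃ s t : ℂ, (s ≠ 0 ∨ t ≠ 0) ∧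
    c * s ^ 2 + x * s * t - star c * t ^ 2 = 0 := by
  by_cases hc : c = 0
  · exact ⟨1, 0, by simp, by simp [hc]⟩
  · obtain ⟨d, hd⟩ := IsAlgClosed.exists_eq_mul_self (discrim c x (-star c))
    obtain ⟨s, hs⟩ := exists_quadratic_eq_zero hc ⟨d, hd⟩
    exact ⟨s, 1, by simp, by linear_combination hs⟩

lemma sum_conj_self {m : ℕ} (w : Fin m → ℂ) (h : ∑ k, star (w k) * w k = 0) (i : Fin m) : w i = 0 := by
  have h1 : ∑ k, Complex.normSq (w k) = 0 := by
    have := congrArg Complex.re h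
    simpa [Complex.normSq_apply] using this
  have := (Finset.sum_eq_zero_iff_of_nonneg (fun k _ => Complex.normSq_nonneg (w k))).1 h1 i (Finset.mem_univ i)
  simpa using this

def qJ : ℍ[ℝ] := qmk 0 0 1 0
def qI : ℍ[ℝ] := ((Complex.I : ℂ) : ℍ[ℝ])

lemma extraN1 {m : ℕ} (A : Matrix (Fin m) (Fin 1) ℍ[ℝ]) : ∃ p ∈ stabSet8 A, p.2 ≠ 0 := by
  let a : Fin m → ℂ := fun i => ⟨(A i 0).re, (A i 0).imI⟩
  let b : Fin m → ℂ := fun i => ⟨(A i 0).imJ, (A i 0).imK⟩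
  obtain ⟨s', t, hst, hq⟩ := quad (∑ k, Complex.normSq (a k) - ∑ k, Complex.normSq (b k)) (∑ k, star (a k) * b k)
  obtain ⟨s, rfl⟩ : ∃ s, s' = star s := ⟨star s', by simp⟩
  let q : ℍ[ℝ] := qmk s.re s.im t.re t.im
  have hq0 : q ≠ 0 := by
    intro h
    have h1 := congrArg QuaternionAlgebra.re h
    have h2 := congrArg QuaternionAlgebra.imI h
    have h3 := congrArg QuaternionAlgebra.imJ h
    have h4 := congrArg QuaternionAlgebra.imK h
    simp [q] at h1 h2 h3 h4
    rcases hst with h | h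
    · apply h; apply Complex.ext <;> simp [h1, h2]
    · apply h; apply Complex.ext <;> simp [h3, h4]
  let w1 : Fin m → ℂ := fun i => a i * s - b i * star t
  let w2 : Fin m → ℂ := fun i => a i * t + b i * star s
  have hw : ∀ i, A i 0 * q = (w1 i : ℍ[ℝ]) + (w2 i : ℍ[ℝ]) * qJ := by
    intro i
    apply Quaternion.ext <;> simp [w1, w2, a, b, q, qJ] <;> ring
  have horth : ∑ k, star (w1 k) * w2 k = 0 := by
    have e : ∀ k, star (w1 k) * w2 k = star s * t * (Complex.normSq (a k)) + star s ^ 2 * (star (a k) * b k)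
        - t ^ 2 * star (star (a k) * b k) - t * star s * Complex.normSq (b k) := by
      intro k
      rw [Complex.normSq_eq_conj_mul_self, Complex.normSq_eq_conj_mul_self]
      simp [w1, w2]; ring
    simp_rw [e, Finset.sum_sub_distrib, Finset.sum_add_distrib, ← Finset.mul_sum]
    rw [← star_sum]
    push_cast at hq
    linear_combination hq
  have horth' : ∑ k, star (w2 k) * w1 k = 0 := by
    have := congrArg star horth
    simpa [mul_comm] using this
  let X : Matrix (Fin m) (Fin m) ℂ := Matrix.of fun i k => Complex.I *
    (w1 i * star (w1 k) * (∑ l, star (w1 l) * w1 l)⁻¹ - w2 i * star (w2 k) * (∑ l, star (w2 l) * w2 l)⁻¹)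
  have hX1 : ∀ i, ∑ k, X i k * w1 k = Complex.I * w1 i := by
    intro i
    have e : ∀ k, X i k * w1 k = Complex.I * (w1 i * (∑ l, star (w1 l) * w1 l)⁻¹) * (star (w1 k) * w1 k)
       - Complex.I * (w2 i * (∑ l, star (w2 l) * w2 l)⁻¹) * (star (w2 k) * w1 k) := by
      intro k; simp only [X, of_apply]; ring
    simp_rw [e, Finset.sum_sub_distrib, ← Finset.mul_sum, horth']
    by_cases h0 : ∑ l, star (w1 l) * w1 l = 0
    · simp [sum_conj_self w1 h0 i]
    · field_simp; simp
  have hX2 : ∀ i, ∑ k, X i k * w2 k = -Complex.I * w2 i := by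
    intro i
    have e : ∀ k, X i k * w2 k = Complex.I * (w1 i * (∑ l, star (w1 l) * w1 l)⁻¹) * (star (w1 k) * w2 k)
       - Complex.I * (w2 i * (∑ l, star (w2 l) * w2 l)⁻¹) * (star (w2 k) * w2 k) := by
      intro k; simp only [X, of_apply]; ring
    simp_rw [e, Finset.sum_sub_distrib, ← Finset.mul_sum, horth]
    by_cases h0 : ∑ l, star (w2 l) * w2 l = 0
    · simp [sum_conj_self w2 h0 i]
    · field_simp; simp
  have hqq : q * star q = ((Quaternion.normSq q : ℝ) : ℍ[ℝ]) := Quaternion.self_mul_star q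
  have hN : Quaternion.normSq q ≠ 0 := by simpa using hq0
  refine ⟨(X, Matrix.of fun _ _ => (Quaternion.normSq q)⁻¹ • (q * qI * star q)), ⟨?_, ?_, ?_⟩, ?_⟩
  · ext i k
    have e1 : star (∑ l, star (w1 l) * w1 l) = ∑ l, star (w1 l) * w1 l := by
      rw [star_sum]; simp [mul_comm]
    have e2 : star (∑ l, star (w2 l) * w2 l) = ∑ l, star (w2 l) * w2 l := by
      rw [star_sum]; simp [mul_comm]
    simp only [X, conjTranspose_apply, of_apply, Matrix.neg_apply, star_mul', star_sub, star_inv₀, e1, e2, star_star]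
    have : star Complex.I = - Complex.I := by simp
    rw [this]; ring
  · ext1 i k
    have : star qI = - qI := by apply Quaternion.ext <;> simp [qI]
    simp [Quaternion.star_smul, this, mul_assoc]
  · ext1 i k
    fin_cases k
    simp only [Matrix.mul_apply, map_apply, of_apply, Finset.univ_unique, Finset.sum_singleton, Fin.default_eq_zero, Fin.zero_eta]
    have hA : ∀ l, A l 0 = (Quaternion.normSq q)⁻¹ • ((w1 l : ℍ[ℝ]) + (w2 l : ℍ[ℝ]) * qJ) * star q := by
      intro l
      rw [← hw, smul_mul_assoc, mul_assoc, hqq, Quaternion.mul_coe_eq_smul, smul_smul, inv_mul_cancel₀ hN, one_smul]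
    have e : ∑ l, (X i l : ℍ[ℝ]) * ((w1 l : ℍ[ℝ]) + (w2 l : ℍ[ℝ]) * qJ) = A i 0 * q * qI := by
      have e1 := congrArg Quaternion.ofComplex (hX1 i)
      have e2 := congrArg Quaternion.ofComplex (hX2 i)
      simp only [map_sum, map_mul, map_neg, Quaternion.coe_ofComplex] at e1 e2
      simp_rw [mul_add, ← mul_assoc, Finset.sum_add_distrib, ← Finset.sum_mul]
      rw [e1, e2, hw]
      apply Quaternion.ext <;> simp [qI, qJ]
    calc ∑ l, (X i l : ℍ[ℝ]) * A l 0 = (Quaternion.normSq q)⁻¹ • ((∑ l, (X i l : ℍ[ℝ]) * ((w1 l : ℍ[ℝ]) + (w2 l : ℍ[ℝ]) * qJ)) * star q) := by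
          rw [Finset.sum_mul, Finset.smul_sum]
          refine Finset.sum_congr rfl fun l _ => ?_
          rw [hA l, smul_mul_assoc, mul_smul_comm, mul_assoc]
      _ = _ := by rw [e]; simp [mul_assoc]
  · intro h
    have := congrFun (congrFun h 0) 0
    have hI : qI ≠ 0 := by
      intro h; simpa [qI] using congrArg QuaternionAlgebra.imI h
    simp [hN, hq0, hI] at this

lemma sum_star_self {n : ℕ} (p : Fin n → ℍ[ℝ]) :
   ∑ a, p a * star (p a) = ((∑ a, Quaternion.normSq (p a) : ℝ) : ℍ[ℝ]) := by
  rw [show ((∑ a, Quaternion.normSq (p a) : ℝ) : ℍ[ℝ]) = ∑ a, ((Quaternion.normSq (p a) : ℝ) : ℍ[ℝ]) by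
    apply Quaternion.ext <;> simp [qsum_re, qsum_imI, qsum_imJ, qsum_imK]]
  simp [Quaternion.self_mul_star]

lemma normSq_zero {n : ℕ} (p : Fin n → ℍ[ℝ]) (h : ∑ a, Quaternion.normSq (p a) = 0) (b) : p b = 0 := by
  have := (Finset.sum_eq_zero_iff_of_nonneg (fun k _ => Quaternion.normSq_nonneg (a := p k))).1 h b (Finset.mem_univ b)
  simpa using this

lemma exY {n : ℕ} (p p' : Fin n → ℍ[ℝ]) (h : ∑ a, p a * star (p' a) = 0) :
    ∃ Y : Matrix (Fin n) (Fin n) ℍ[ℝ], Yᴴ = -Y ∧ (∀ b, ∑ a, p a * Y a b = qI * p b) ∧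
      (∀ b, ∑ a, p' a * Y a b = qI * p' b) := by
  have h' : ∑ a, p' a * star (p a) = 0 := by
    have := congrArg star h
    simpa using this
  let N := ∑ a, Quaternion.normSq (p a)
  let N' := ∑ a, Quaternion.normSq (p' a)
  have hI : star qI = - qI := by apply Quaternion.ext <;> simp [qI]
  refine ⟨Matrix.of fun a b => N⁻¹ • (star (p a) * qI * p b) + N'⁻¹ • (star (p' a) * qI * p' b), ?_, ?_, ?_⟩
  · ext1 a b
    simp [Quaternion.star_smul, hI, mul_assoc]; abel
  · intro b
    have e : ∀ a, p a * (N⁻¹ • (star (p a) * qI * p b) + N'⁻¹ • (star (p' a) * qI * p' b))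
      = (p a * star (p a)) * (N⁻¹ • (qI * p b)) + (p a * star (p' a)) * (N'⁻¹ • (qI * p' b)) := by
      intro a; simp [mul_add, mul_assoc]
    simp only [of_apply, e, Finset.sum_add_distrib, ← Finset.sum_mul, h, sum_star_self]
    rw [zero_mul, add_zero, Quaternion.coe_mul_eq_smul, smul_smul]
    by_cases h0 : N = 0
    · simp [normSq_zero p h0]
    · rw [mul_inv_cancel₀ h0, one_smul]
  · intro b
    have e : ∀ a, p' a * (N⁻¹ • (star (p a) * qI * p b) + N'⁻¹ • (star (p' a) * qI * p' b))
      = (p' a * star (p a)) * (N⁻¹ • (qI * p b)) + (p' a * star (p' a)) * (N'⁻¹ • (qI * p' b)) := by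
      intro a; simp [mul_add, mul_assoc]
    simp only [of_apply, e, Finset.sum_add_distrib, ← Finset.sum_mul, h', sum_star_self]
    rw [zero_mul, zero_add, Quaternion.coe_mul_eq_smul, smul_smul]
    by_cases h0 : N' = 0
    · simp [normSq_zero p' h0]
    · rw [mul_inv_cancel₀ h0, one_smul]

lemma extraM1 {n : ℕ} (A : Matrix (Fin 1) (Fin n) ℍ[ℝ]) : ∃ p ∈ stabSet8 A, p.1 ≠ 0 := by
  obtain ⟨Y, hY, h1, -⟩ := exY (A 0) 0 (by simp)
  refine ⟨(Matrix.of fun _ _ => Complex.I, Y), ⟨?_, hY, ?_⟩, ?_⟩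
  · ext i j; simp
  · ext1 i j
    fin_cases i
    simp [Matrix.mul_apply, h1, qI]
  · intro h
    have := congrFun (congrFun h 0) 0
    simp at this


lemma exY2 {n : ℕ} (P0 P1 : Fin n → ℍ[ℝ]) (hre : (∑ a, P0 a * star (P1 a)).re = 0)
    (him : (∑ a, P0 a * star (P1 a)).imI = 0) :
    ∃ Y : Matrix (Fin n) (Fin n) ℍ[ℝ], Yᴴ = -Y ∧ (∀ b, ∑ a, P0 a * Y a b = qI * P0 b) ∧
      (∀ b, ∑ a, P1 a * Y a b = - (qI * P1 b)) := by
  let κ := ∑ a, P0 a * star (P1 a)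
  let N := ∑ a, Quaternion.normSq (P0 a)
  let e : ℍ[ℝ] := N⁻¹ • (qJ * star κ)
  have hk : ∑ a, P0 a * star (P1 a) = κ := rfl
  have hre' : κ.re = 0 := hre
  have him' : κ.imI = 0 := him
  have he : e * qI = qI * e := by
    simp only [e, smul_mul_assoc, mul_smul_comm]
    congr 1
    apply Quaternion.ext <;> simp [qI, qJ, hre', him']
  have horth : ∑ a, P0 a * star (qJ * P1 a - e * P0 a) = 0 := by
    have e1 : ∀ a, P0 a * star (qJ * P1 a - e * P0 a) = P0 a * star (P1 a) * star qJ - P0 a * star (P0 a) * star e := by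
      intro a; simp [mul_sub, mul_assoc]
    simp only [e1, Finset.sum_sub_distrib, ← Finset.sum_mul, hk, sum_star_self]
    by_cases h0 : N = 0
    · have : κ = 0 := by simp [κ, normSq_zero P0 h0]
      simp [this, e]
    · rw [Quaternion.coe_mul_eq_smul]
      simp only [e, Quaternion.star_smul]
      rw [smul_smul, mul_inv_cancel₀ h0]
      simp
  obtain ⟨Y, hY, h1, h2⟩ := exY P0 _ horth
  refine ⟨Y, hY, h1, fun b => ?_⟩
  have h3 := h2 b
  simp only [sub_mul, Finset.sum_sub_distrib, mul_assoc, ← Finset.mul_sum, h1] at h3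
  have h4 : qJ * ∑ a, P1 a * Y a b = qI * (qJ * P1 b) := by
    rw [mul_sub, ← mul_assoc e, he, mul_assoc qI] at h3
    exact sub_left_injective h3
  have h5 := congrArg (fun z => -qJ * z) h4
  simp only [← mul_assoc] at h5
  have e1 : -qJ * qJ = 1 := by apply Quaternion.ext <;> simp [qJ]
  have e2 : -qJ * qI * qJ = - qI := by apply Quaternion.ext <;> simp [qJ, qI]
  rw [e1, e2] at h5
  simpa using h5

set_option maxHeartbeats 2000000 in
lemma extraM2 {n : ℕ} (A : Matrix (Fin 2) (Fin n) ℍ[ℝ]) : ∃ p ∈ stabSet8 A, p.1 ≠ 0 := by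
  let κ := ∑ a, A 0 a * star (A 1 a)
  let α := ∑ a, Quaternion.normSq (A 0 a)
  let β := ∑ a, Quaternion.normSq (A 1 a)
  obtain ⟨s, t, hst, hq⟩ := quad (β - α) ⟨κ.re, κ.imI⟩
  let P0 : Fin n → ℍ[ℝ] := fun a => (s : ℍ[ℝ]) * A 0 a + (t : ℍ[ℝ]) * A 1 a
  let P1 : Fin n → ℍ[ℝ] := fun a => - ((star t : ℂ) : ℍ[ℝ]) * A 0 a + ((star s : ℂ) : ℍ[ℝ]) * A 1 a
  have hs : ∀ z : ℂ, star ((star z : ℂ) : ℍ[ℝ]) = (z : ℍ[ℝ]) := by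
    intro z; apply Quaternion.ext <;> simp
  have hP : ∑ a, P0 a * star (P1 a) = - ((s : ℍ[ℝ]) * (α : ℍ[ℝ]) * (t : ℍ[ℝ])) + (s : ℍ[ℝ]) * κ * (s : ℍ[ℝ])
      - (t : ℍ[ℝ]) * star κ * (t : ℍ[ℝ]) + (t : ℍ[ℝ]) * (β : ℍ[ℝ]) * (s : ℍ[ℝ]) := by
    have e : ∀ a, P0 a * star (P1 a) = - ((s : ℍ[ℝ]) * (A 0 a * star (A 0 a)) * (t : ℍ[ℝ])) + (s : ℍ[ℝ]) * (A 0 a * star (A 1 a)) * (s : ℍ[ℝ])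
      - (t : ℍ[ℝ]) * star (A 0 a * star (A 1 a)) * (t : ℍ[ℝ]) + (t : ℍ[ℝ]) * (A 1 a * star (A 1 a)) * (s : ℍ[ℝ]) := by
      intro a
      simp only [P0, P1, star_add, star_mul, star_neg, hs, star_star]
      noncomm_ring
    simp only [e, Finset.sum_add_distrib, Finset.sum_sub_distrib, Finset.sum_neg_distrib, ← Finset.sum_mul, ← Finset.mul_sum, sum_star_self]
    rw [← star_sum]
  have hr := congrArg Complex.re hq
  have hi := congrArg Complex.im hq
  simp [pow_two] at hr hi
  obtain ⟨Y, hY, h0, h1⟩ := exY2 P0 P1 (by rw [hP]; simp; linarith) (by rw [hP]; simp; linarith)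
  let N : ℝ := Complex.normSq s + Complex.normSq t
  have hN : (N : ℍ[ℝ]) = (s : ℍ[ℝ]) * ((star s : ℂ) : ℍ[ℝ]) + (t : ℍ[ℝ]) * ((star t : ℂ) : ℍ[ℝ]) := by
    apply Quaternion.ext <;> simp [N, Complex.normSq_apply] <;> ring
  have hN0 : N ≠ 0 := by
    have := Complex.normSq_nonneg s
    have := Complex.normSq_nonneg t
    intro h
    have h1 : Complex.normSq s = 0 := by simp only [N] at h; linarith
    have h2 : Complex.normSq t = 0 := by simp only [N] at h; linarith
    simp at h1 h2
    simp [h1, h2] at hst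
  have r0 : ∀ a, (N : ℍ[ℝ]) * A 0 a = ((star s : ℂ) : ℍ[ℝ]) * P0 a - (t : ℍ[ℝ]) * P1 a := by
    intro a; apply Quaternion.ext <;> simp [N, P0, P1, Complex.normSq_apply] <;> ring
  have r1 : ∀ a, (N : ℍ[ℝ]) * A 1 a = ((star t : ℂ) : ℍ[ℝ]) * P0 a + (s : ℍ[ℝ]) * P1 a := by
    intro a; apply Quaternion.ext <;> simp [N, P0, P1, Complex.normSq_apply] <;> ring
  let X : Matrix (Fin 2) (Fin 2) ℂ := !![Complex.I * (s * star s - t * star t), Complex.I * (2 * star s * t);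
    Complex.I * (2 * star t * s), Complex.I * (t * star t - s * star s)]
  refine ⟨(X, N • Y), ⟨?_, ?_, ?_⟩, ?_⟩
  · ext i j
    fin_cases i <;> fin_cases j <;> simp [X] <;> ring
  · ext1 i j
    have := congrFun (congrFun hY i) j
    simp only [conjTranspose_apply, Matrix.neg_apply] at this
    show star (N • Y j i) = - (N • Y i j)
    rw [Quaternion.star_smul, this, smul_neg]
  · ext1 i b
    have hsm : ∀ i, ∑ a, A i a * (N • Y) a b = ∑ a, ((N : ℍ[ℝ]) * A i a) * Y a b := by
      intro i
      refine Finset.sum_congr rfl fun a _ => ?_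
      rw [Matrix.smul_apply, mul_smul_comm, Quaternion.coe_mul_eq_smul, smul_mul_assoc]
    simp only [Matrix.mul_apply, hsm, Fin.sum_univ_two, map_apply]
    fin_cases i
    · simp only [Fin.zero_eta, r0, sub_mul, Finset.sum_sub_distrib, mul_assoc, ← Finset.mul_sum, h0, h1]
      apply Quaternion.ext <;> simp [X, P0, P1, qI] <;> ring
    · simp only [Fin.mk_one, r1, add_mul, Finset.sum_add_distrib, mul_assoc, ← Finset.mul_sum, h0, h1]
      apply Quaternion.ext <;> simp [X, P0, P1, qI] <;> ring
  · intro h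
    have e0 := congrFun (congrFun h 0) 0
    have e1 := congrFun (congrFun h 0) 1
    simp [X] at e0 e1
    rcases e1 with e1 | e1 <;> simp [e1] at e0 hst <;> exact hst e0

lemma lower' {m n : ℕ} (hm : 1 ≤ m) (hn : 1 ≤ n) (A : Matrix (Fin m) (Fin n) (Quaternion ℝ)) :
    (if (m ≤ 2 ∧ m ≤ n) ∨ (n = 1 ∧ 2 ≤ m) then 1 else 0) + (m - 2 * n) ^ 2 + (n - m) * (2 * (n - m) + 1) ≤
      Module.finrank ℝ (stabSub A) := by
  obtain ⟨U, hU, hf, h1, h2⟩ := lower A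
  split_ifs with h
  · have : U < stabSub A := by
      refine lt_of_le_of_ne hU ?_
      rintro rfl
      rcases h with ⟨h3, h4⟩ | ⟨rfl, h4⟩
      · have key : ∃ p ∈ stabSet8 A, p.1 ≠ 0 := by
          obtain rfl | rfl : m = 1 ∨ m = 2 := by omega
          · exact extraM1 A
          · exact extraM2 A
        obtain ⟨p, hp, hp'⟩ := key
        exact hp' (h2 (by omega) p hp)
      · obtain ⟨p, hp, hp'⟩ := extraN1 A
        exact hp' (h1 (by omega) p hp)
    have := Submodule.finrank_lt_finrank_of_lt this
    omega
  · have := Submodule.finrank_mono hU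
    omega


def ee (a b : ℕ) : ℝ := if a = b then 1 else 0
noncomputable def SS (s : ℕ) : ℝ := ∑ j ∈ Finset.range s, (1 + (j : ℝ) ^ 2)
noncomputable def be (s : ℕ) : ℝ := 2 / SS s
noncomputable def vv (s a : ℕ) : ℝ := if a < s then 1 else (a : ℝ) - s
noncomputable def ww (s a : ℕ) : ℝ := if a < s then a else -1
noncomputable def p0 (s a j : ℕ) : ℝ := ee a j - be s * vv s a
noncomputable def p1 (s a j : ℕ) : ℝ := ee a (s + j) - be s * vv s a * j
noncomputable def om (s a b : ℕ) : ℝ := ∑ j ∈ Finset.range s, (p1 s a j * p0 s b j - p0 s a j * p1 s b j)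

lemma SS_pos {s : ℕ} (hs : 0 < s) : 0 < SS s := by
  apply Finset.sum_pos
  · intro i _; positivity
  · exact ⟨0, by simpa using hs⟩

lemma be_pos {s : ℕ} (hs : 0 < s) : 0 < be s := div_pos two_pos (SS_pos hs)

lemma SS_ne_two {s : ℕ} : SS s ≠ 2 := by
  intro h
  have h0 : SS s = ((∑ j ∈ Finset.range s, (1 + j ^ 2) : ℕ) : ℝ) := by simp [SS]
  rw [h0] at h
  have h' : (∑ j ∈ Finset.range s, (1 + j ^ 2) : ℕ) = 2 := by exact_mod_cast h
  rcases s with _ | _ | s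
  · simp at h'
  · simp at h'
  · rw [Finset.sum_range_succ', Finset.sum_range_succ'] at h'
    simp at h'

lemma be_ne_one {s : ℕ} (hs : 0 < s) : be s ≠ 1 := by
  intro h
  have := SS_pos hs
  rw [be, div_eq_one_iff_eq this.ne'] at h
  exact SS_ne_two h.symm

lemma sum_ee {s a : ℕ} (f : ℕ → ℝ) : ∑ j ∈ Finset.range s, ee a j * f j = if a < s then f a else 0 := by
  simp [ee]

lemma sum_ee' {s a : ℕ} (f : ℕ → ℝ) : ∑ j ∈ Finset.range s, ee a (s + j) * f j =
    if s ≤ a ∧ a < 2 * s then f (a - s) else 0 := by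
  split_ifs with h
  · rw [Finset.sum_eq_single (a - s)]
    · rw [ee, if_pos (by omega), one_mul]
    · intro j _ hj
      rw [ee, if_neg (by omega), zero_mul]
    · intro hj; simp at hj; omega
  · apply Finset.sum_eq_zero
    intro j hj
    simp at hj
    rw [ee, if_neg (by omega), zero_mul]

lemma re_sum {s a b : ℕ} (ha : a < 2 * s) (hb : b < 2 * s) :
    ∑ j ∈ Finset.range s, (p0 s a j * p0 s b j + p1 s a j * p1 s b j) = ee a b := by
  have hs : 0 < s := by omega
  have e : ∀ j, p0 s a j * p0 s b j + p1 s a j * p1 s b j =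
    ee a j * ee b j + ee a (s + j) * ee b (s + j) - be s * vv s b * (ee a j * 1 + ee a (s + j) * j)
      - be s * vv s a * (ee b j * 1 + ee b (s + j) * j) + be s ^ 2 * vv s a * vv s b * (1 + (j : ℝ) ^ 2) := by
    intro j; simp only [p0, p1]; ring
  simp only [e, Finset.sum_add_distrib, Finset.sum_sub_distrib, ← Finset.mul_sum]
  have hv : ∀ a < 2 * s, ∑ j ∈ Finset.range s, ee a j * 1 + ∑ j ∈ Finset.range s, ee a (s + j) * (j : ℝ) = vv s a := by
    intro a ha
    rw [sum_ee (fun _ => 1), sum_ee' (fun j => (j : ℝ)), vv]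
    by_cases h : a < s
    · rw [if_pos h, if_neg (by omega), if_pos h, add_zero]
    · rw [if_neg h, if_pos (by omega), if_neg h, zero_add, Nat.cast_sub (by omega)]
  rw [hv a ha, hv b hb, sum_ee, sum_ee' (fun j => ee b (s + j))]
  have hS : ∑ i ∈ Finset.range s, (1 : ℝ) + ∑ i ∈ Finset.range s, (i : ℝ) ^ 2 = SS s := by
    rw [SS, Finset.sum_add_distrib]
  rw [hS]
  have hd : (if a < s then ee b a else 0) + (if s ≤ a ∧ a < 2 * s then ee b (s + (a - s)) else 0) = ee a b := by
    by_cases h : a < s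
    · rw [if_pos h, if_neg (by omega)]; simp [ee, eq_comm]
    · rw [if_neg h, if_pos (by omega), show s + (a - s) = a by omega]; simp [ee, eq_comm]
  rw [hd]
  have : be s * SS s = 2 := by rw [be]; exact div_mul_cancel₀ _ (SS_pos hs).ne'
  linear_combination be s * vv s a * vv s b * this

lemma om_eq {s a b : ℕ} (ha : a < 2 * s) (hb : b < 2 * s) :
    om s a b = (if a < s then 0 else ee b (a - s)) - (if a < s then ee b (s + a) else 0) +
      be s * (vv s b * ww s a - vv s a * ww s b) := by
  have e : ∀ j, p1 s a j * p0 s b j - p0 s a j * p1 s b j =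
    ee a (s + j) * ee b j - ee a j * ee b (s + j) + be s * vv s b * (ee a j * j - ee a (s + j) * 1)
      - be s * vv s a * (ee b j * j - ee b (s + j) * 1) := by
    intro j; simp only [p0, p1]; ring
  simp only [om, e, Finset.sum_add_distrib, Finset.sum_sub_distrib, ← Finset.mul_sum]
  have hw : ∀ a < 2 * s, ∑ j ∈ Finset.range s, ee a j * (j : ℝ) - ∑ j ∈ Finset.range s, ee a (s + j) * 1 = ww s a := by
    intro a ha
    rw [sum_ee (fun j => (j : ℝ)), sum_ee' (fun j => 1), ww]
    by_cases h : a < s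
    · rw [if_pos h, if_neg (by omega), if_pos h, sub_zero]
    · rw [if_neg h, if_pos (by omega), if_neg h, zero_sub]
  rw [hw a ha, hw b hb, sum_ee (fun j => ee b (s + j)), sum_ee' (fun j => ee b j)]
  by_cases h : a < s
  · rw [if_neg (by omega)]; simp only [h, if_true]; ring
  · rw [if_pos (by omega)]; simp only [h, if_false]; ring

lemma om1 {s a b : ℕ} (hab : a < b) (hb : b < s) : om s a b ≠ 0 := by
  rw [om_eq (by omega) (by omega)]
  have ha : a < s := by omega
  have hbe := be_pos (show 0 < s by omega)
  have : (a : ℝ) < b := by exact_mod_cast hab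
  have h2 : ee b (s + a) = 0 := by rw [ee, if_neg (by omega)]
  simp only [ha, hb, if_true, vv, ww, h2]
  have : 0 < be s * ((b : ℝ) - a) := mul_pos hbe (by linarith)
  intro h; linarith

lemma om2 {s a c : ℕ} (ha : a < s) (hc : c < s) (hac : a ≠ c) : om s a (s + c) ≠ 0 := by
  rw [om_eq (by omega) (by omega)]
  have hbe := be_pos (show 0 < s by omega)
  have h2 : ee (s + c) (s + a) = 0 := by rw [ee, if_neg (by omega)]
  simp only [ha, if_true, vv, ww, h2, if_neg (show ¬ (s + c < s) by omega)]
  push_cast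
  have : 0 < be s * ((c : ℝ) * a + 1) := by positivity
  intro h; linarith

lemma om3 {s : ℕ} (hs : 0 < s) : om s 0 s ≠ 0 := by
  rw [om_eq (by omega) (by omega)]
  have hbe := be_ne_one hs
  have h2 : ee s (s + 0) = 1 := by rw [ee, if_pos (by omega)]
  simp only [hs, if_true, vv, ww, h2, lt_irrefl, if_false]
  simp
  intro h; apply hbe; linarith

lemma theta_zero {s r : ℕ} (hr : r ≤ 2 * s) (θ : ℕ → ℝ)
    (h : ∀ a b, a < r → b < r → (θ a + θ b) * om s a b = 0) (h2 : r ≤ 2 → θ 0 = 0) :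
    ∀ a < r, θ a = 0 := by
  have key : ∀ a b, a < r → b < r → om s a b ≠ 0 → θ a + θ b = 0 := by
    intro a b ha hb hne
    exact (mul_eq_zero.1 (h a b ha hb)).resolve_right hne
  by_cases hr2 : r ≤ 2
  · have h0 := h2 hr2
    intro a ha
    rcases a with _ | _ | a
    · exact h0
    · have : θ 0 + θ 1 = 0 := by
        by_cases hs : s = 1
        · subst hs
          exact key 0 1 (by omega) (by omega) (om3 (by omega))
        · exact key 0 1 (by omega) (by omega) (om1 (by omega) (by omega))
      simp; linarith
    · omega
  · have e01 := key 0 1 (by omega) (by omega) (om1 (by omega) (by omega))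
    have e02 : θ 0 + θ 2 = 0 := by
      by_cases hs : s = 2
      · subst hs; exact key 0 2 (by omega) (by omega) (om3 (by omega))
      · exact key 0 2 (by omega) (by omega) (om1 (by omega) (by omega))
    have e12 : θ 1 + θ 2 = 0 := by
      by_cases hs : s = 2
      · subst hs; exact key 1 2 (by omega) (by omega) (om2 (a := 1) (c := 0) (by omega) (by omega) (by omega))
      · exact key 1 2 (by omega) (by omega) (om1 (by omega) (by omega))
    have t0 : θ 0 = 0 := by linarith
    have t1 : θ 1 = 0 := by linarith
    intro b hb
    by_cases hb0 : b = 0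
    · rw [hb0, t0]
    by_cases hbs : b < s
    · have := key 0 b (by omega) hb (om1 (by omega) hbs)
      linarith
    · obtain ⟨c, rfl⟩ := Nat.exists_eq_add_of_le (not_lt.1 hbs)
      by_cases hc : c = 0
      · have := key 1 (s + c) (by omega) hb (om2 (by omega) (by omega) (by omega))
        linarith
      · have := key 0 (s + c) (by omega) hb (om2 (by omega) (by omega) (by omega))
        linarith

lemma y_zero {s : ℕ} (y : ℕ → ℍ[ℝ])
    (h : ∀ a < s, ∑ j ∈ Finset.range s, qmk (p0 s a j) 0 (p1 s a j) 0 * y j = 0) :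
    ∀ a < s, y a = 0 := by
  intro a0 ha0
  have hs : 0 < s := by omega
  have hbe := be_pos hs
  let C : ℍ[ℝ] := ∑ j ∈ Finset.range s, qmk (be s) 0 (be s * j) 0 * y j
  have hy : ∀ a < s, y a = C := by
    intro a ha
    have e : ∀ j ∈ Finset.range s, qmk (p0 s a j) 0 (p1 s a j) 0 * y j = (if a = j then y j else 0) - qmk (be s) 0 (be s * j) 0 * y j := by
      intro j hj
      have h1 : ee a (s + j) = 0 := by rw [ee, if_neg (by omega)]
      have hv : vv s a = 1 := by rw [vv, if_pos ha]
      have h2 : qmk (p0 s a j) 0 (p1 s a j) 0 = (if a = j then 1 else 0) - qmk (be s) 0 (be s * j) 0 := by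
        split_ifs with haj
        · have h3 : ee a j = 1 := by rw [ee, if_pos haj]
          apply Quaternion.ext <;> simp [p0, p1, h1, hv, h3]
        · have h3 : ee a j = 0 := by rw [ee, if_neg haj]
          apply Quaternion.ext <;> simp [p0, p1, h1, hv, h3]
      rw [h2, sub_mul]
      split_ifs <;> simp
    have := h a ha
    rw [Finset.sum_congr rfl e, Finset.sum_sub_distrib, Finset.sum_ite_eq, if_pos (by simpa using ha)] at this
    exact sub_eq_zero.1 this
  have hC : C = (∑ j ∈ Finset.range s, qmk (be s) 0 (be s * j) 0) * C := by
    conv_lhs => simp only [C]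
    rw [Finset.sum_mul]
    refine Finset.sum_congr rfl fun j hj => ?_
    rw [hy j (by simpa using hj)]
  have hne : (∑ j ∈ Finset.range s, qmk (be s) 0 (be s * j) 0) ≠ 1 := by
    intro h1
    by_cases hs1 : s = 1
    · subst hs1
      have := congrArg QuaternionAlgebra.re h1
      simp at this
      exact be_ne_one hs this
    · have := congrArg QuaternionAlgebra.imJ h1
      rw [qsum_imJ] at this
      simp only [qmk_imJ] at this
      have h0 : 0 < ∑ j ∈ Finset.range s, be s * (j : ℝ) := by
        apply Finset.sum_pos'
        · intro i _; positivity
        · exact ⟨1, by simp; omega, by simpa using hbe⟩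
      rw [this] at h0
      simp at h0
  rw [hy a0 ha0]
  by_contra hC0
  apply hne
  have := mul_right_cancel₀ hC0 ((one_mul C).trans hC)
  exact this.symm


noncomputable def AA (m n s r : ℕ) : Matrix (Fin m) (Fin n) ℍ[ℝ] := Matrix.of fun i j =>
  if (i : ℕ) < r ∧ (j : ℕ) < s then
    qmk ((i + 1) * p0 s i j) 0 ((i + 1) * p1 s i j) 0 else 0

lemma sum_fin_lt {M : Type*} [AddCommMonoid M] {n s : ℕ} (h : s ≤ n) (g : ℕ → M) :
    ∑ j : Fin n, (if (j : ℕ) < s then g j else 0) = ∑ j ∈ Finset.range s, g j := by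
  rw [Fin.sum_univ_eq_sum_range (fun j => if j < s then g j else 0) n, ← Finset.sum_filter]
  congr 1
  ext j; simp; omega

lemma AA_mul {m n s r : ℕ} (hs : s ≤ n) (hr : r ≤ 2 * s) (a b : Fin m) :
    (AA m n s r * (AA m n s r)ᴴ) a b =
      qmk (if a = b ∧ (a : ℕ) < r then ((a : ℝ) + 1) ^ 2 else 0) 0
        (if (a : ℕ) < r ∧ (b : ℕ) < r then ((a : ℝ) + 1) * (b + 1) * om s a b else 0) 0 := by
  by_cases ha : (a : ℕ) < r
  swap
  · have : ∀ j, AA m n s r a j = 0 := by intro j; simp [AA, ha]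
    simp only [Matrix.mul_apply, this]
    apply Quaternion.ext <;> simp [ha]
  by_cases hb : (b : ℕ) < r
  swap
  · have : ∀ j, AA m n s r b j = 0 := by intro j; simp [AA, hb]
    simp only [Matrix.mul_apply, conjTranspose_apply, this]
    have hab : a ≠ b := by rintro rfl; exact hb ha
    apply Quaternion.ext <;> simp [ha, hb, hab]
  have e : ∀ j : Fin n, AA m n s r a j * star (AA m n s r b j) = if (j : ℕ) < s then
      qmk (((a : ℝ) + 1) * (b + 1) * (p0 s a j * p0 s b j + p1 s a j * p1 s b j)) 0
        (((a : ℝ) + 1) * (b + 1) * (p1 s a j * p0 s b j - p0 s a j * p1 s b j)) 0 else 0 := by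
    intro j
    by_cases hj : (j : ℕ) < s
    · simp only [AA, of_apply, ha, hb, hj, and_self, if_true]
      apply Quaternion.ext <;> simp <;> ring
    · simp [AA, hj]
  simp only [Matrix.mul_apply, conjTranspose_apply, e]
  rw [sum_fin_lt hs (fun j => qmk (((a : ℝ) + 1) * (b + 1) * (p0 s a j * p0 s b j + p1 s a j * p1 s b j)) 0
        (((a : ℝ) + 1) * (b + 1) * (p1 s a j * p0 s b j - p0 s a j * p1 s b j)) 0)]
  apply Quaternion.ext
  · rw [qsum_re]
    simp only [qmk_re]
    rw [← Finset.mul_sum, re_sum (by omega) (by omega)]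
    by_cases hab : a = b
    · subst hab; simp [ee, ha]; ring
    · have : (a : ℕ) ≠ b := fun h => hab (Fin.ext h)
      simp [ee, hab, this]
  · rw [qsum_imI]; simp
  · rw [qsum_imJ]
    simp only [qmk_imJ]
    rw [← Finset.mul_sum, if_pos ⟨ha, hb⟩, om]
  · rw [qsum_imK]; simp

lemma X_struct {m n s r : ℕ} (hs : s ≤ n) (hr : r ≤ 2 * s) (hrm : r ≤ m)
    (X : Matrix (Fin m) (Fin m) ℂ) (Y : Matrix (Fin n) (Fin n) ℍ[ℝ])
    (h : (X, Y) ∈ stabSet8 (AA m n s r)) (hm : 0 < m) (h0 : r ≤ 2 → (X ⟨0, hm⟩ ⟨0, hm⟩).im = 0)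
    (a b : Fin m) (hab : ¬ (r ≤ (a : ℕ) ∧ r ≤ (b : ℕ))) : X a b = 0 := by
  obtain ⟨hX, hY, hXY⟩ := h
  simp only at hX hY hXY
  set A := AA m n s r with hA
  let Q := X.map Quaternion.coeComplex
  have hQ : Qᴴ = -Q := by
    ext1 i j
    have := congrFun (congrFun hX i) j
    simp only [conjTranspose_apply, Matrix.neg_apply] at this
    have h1 := congrArg Complex.re this
    have h2 := congrArg Complex.im this
    simp at h1 h2
    simp only [Q, conjTranspose_apply, Matrix.neg_apply, map_apply]
    apply Quaternion.ext <;> simp [h1, h2]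
  have hQK : Q * (A * Aᴴ) = A * Aᴴ * Q := by
    have e1 : Q * (A * Aᴴ) = A * Y * Aᴴ := by rw [← Matrix.mul_assoc, hXY]
    have e2 := congrArg Matrix.conjTranspose e1
    simp only [conjTranspose_mul, conjTranspose_conjTranspose, hQ, hY] at e2
    rw [e1]
    simp only [Matrix.mul_neg, Matrix.neg_mul, neg_inj] at e2
    rw [e2, Matrix.mul_assoc]
  have hent : ∀ a b, ∑ c, (X a c : ℍ[ℝ]) * (A * Aᴴ) c b = ∑ c, (A * Aᴴ) a c * (X c b : ℍ[ℝ]) := by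
    intro a b
    have := congrFun (congrFun hQK a) b
    rw [Matrix.mul_apply, Matrix.mul_apply] at this
    exact this
  let L : Fin m → ℝ := fun a => if (a : ℕ) < r then ((a : ℝ) + 1) ^ 2 else 0
  have hk0 : ∀ a b : Fin m, ((A * Aᴴ) a b).re = if a = b then L a else 0 := by
    intro a b; rw [AA_mul hs hr]; simp only [qmk_re, L, ite_and]
  have hkI : ∀ a b : Fin m, ((A * Aᴴ) a b).imI = 0 := by
    intro a b; rw [AA_mul hs hr]; simp
  have hkK : ∀ a b : Fin m, ((A * Aᴴ) a b).imK = 0 := by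
    intro a b; rw [AA_mul hs hr]; simp
  have hre : ∀ a b, (X a b).re * L b = L a * (X a b).re := by
    intro a b
    have := congrArg QuaternionAlgebra.re (hent a b)
    rw [qsum_re, qsum_re] at this
    simpa [hk0, hkI, hkK] using this
  have him : ∀ a b, (X a b).im * L b = L a * (X a b).im := by
    intro a b
    have := congrArg QuaternionAlgebra.imI (hent a b)
    rw [qsum_imI, qsum_imI] at this
    simpa [hk0, hkI, hkK] using this
  have hoff : ∀ a b : Fin m, a ≠ b → ¬ (r ≤ (a : ℕ) ∧ r ≤ (b : ℕ)) → X a b = 0 := by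
    intro a b hne hr'
    have hL : L a ≠ L b := by
      have hne' : (a : ℕ) ≠ b := fun h => hne (Fin.ext h)
      have hne'' : (a : ℝ) ≠ b := by exact_mod_cast hne'
      simp only [L]
      split_ifs with h1 h2 h2
      · intro h
        have := (sq_eq_sq₀ (by positivity) (by positivity)).1 h
        apply hne''; linarith
      · positivity
      · symm; positivity
      · omega
    apply Complex.ext
    · have := hre a b
      have h2 : (X a b).re * (L a - L b) = 0 := by linarith
      exact (mul_eq_zero.1 h2).resolve_right (sub_ne_zero.2 hL)
    · have := him a b
      have h2 : (X a b).im * (L a - L b) = 0 := by linarith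
      exact (mul_eq_zero.1 h2).resolve_right (sub_ne_zero.2 hL)
  by_cases hne : a = b
  swap
  · exact hoff a b hne hab
  subst hne
  have har : (a : ℕ) < r := by omega
  have hrediag : (X a a).re = 0 := by
    have := congrArg Complex.re (congrFun (congrFun hX a) a)
    simp at this; linarith
  have hK : ∀ a b : Fin m, (a : ℕ) < r → (b : ℕ) < r →
      ((X a a).im + (X b b).im) * om s a b = 0 := by
    intro a b ha hb
    have e := hent a b
    rw [Finset.sum_eq_single a, Finset.sum_eq_single b] at e
    · have := congrArg QuaternionAlgebra.imK e
      rw [AA_mul hs hr, if_pos (⟨ha, hb⟩ : (a : ℕ) < r ∧ (b : ℕ) < r)] at this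
      simp at this
      have hp : ((a : ℝ) + 1) * (b + 1) ≠ 0 := by positivity
      apply mul_left_cancel₀ hp
      linear_combination this
    · intro c _ hc
      rw [hoff c b hc (by omega)]; simp
    · simp
    · intro c _ hc
      rw [hoff a c hc.symm (by omega)]; simp
    · simp
  let θ : ℕ → ℝ := fun i => if hi : i < m then (X ⟨i, hi⟩ ⟨i, hi⟩).im else 0
  have := theta_zero hr θ (by
    intro a b ha hb
    simp only [θ, dif_pos (show a < m by omega), dif_pos (show b < m by omega)]
    exact hK ⟨a, by omega⟩ ⟨b, by omega⟩ ha hb) (by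
    intro h2
    simp only [θ, dif_pos hm]
    exact h0 h2) a har
  simp only [θ, dif_pos a.2] at this
  exact Complex.ext hrediag this

lemma Y_struct {m n s r : ℕ} (hs : s ≤ n) (hsr : s ≤ r) (hrm : r ≤ m)
    (Y : Matrix (Fin n) (Fin n) ℍ[ℝ]) (h : AA m n s r * Y = 0) (i j : Fin n) (hi : (i : ℕ) < s) :
    Y i j = 0 := by
  let y : ℕ → ℍ[ℝ] := fun i => if hi : i < n then Y ⟨i, hi⟩ j else 0
  have := y_zero (s := s) y (by
    intro a ha
    have e := congrFun (congrFun h ⟨a, by omega⟩) j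
    rw [Matrix.mul_apply] at e
    have e2 : ∀ l : Fin n, AA m n s r ⟨a, by omega⟩ l * Y l j =
      if (l : ℕ) < s then ((a + 1 : ℝ)) • (qmk (p0 s a l) 0 (p1 s a l) 0 * y l) else 0 := by
      intro l
      by_cases hl : (l : ℕ) < s
      · have : y l = Y l j := by simp [y]
        rw [if_pos hl, this, ← smul_mul_assoc]
        congr 1
        simp only [AA, of_apply]
        rw [if_pos (by constructor <;> omega)]
        apply Quaternion.ext <;> simp
      · simp [AA, hl]
    rw [Finset.sum_congr rfl (fun l _ => e2 l),
      sum_fin_lt hs (fun l => ((a + 1 : ℝ)) • (qmk (p0 s a l) 0 (p1 s a l) 0 * y l)), ← Finset.smul_sum] at e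
    have hp : (a + 1 : ℝ) ≠ 0 := by positivity
    exact (smul_eq_zero.1 e).resolve_left hp) i hi
  simpa [y] using this

def Phi {m n : ℕ} (s r e : ℕ) (hm : 0 < m) (hr : r ≤ m) (hs : s ≤ n) :
    (Matrix (Fin m) (Fin m) ℂ × Matrix (Fin n) (Fin n) ℍ[ℝ]) →ₗ[ℝ]
      ((Fin e → ℝ) × Matrix (Fin (m - r)) (Fin (m - r)) ℝ × SpC (n - s)) where
  toFun p := (fun _ => (p.1 ⟨0, hm⟩ ⟨0, hm⟩).im,
    Matrix.of fun a b => (p.1 ⟨r + a, by omega⟩ ⟨r + b, by omega⟩).re + (p.1 ⟨r + a, by omega⟩ ⟨r + b, by omega⟩).im,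
    Matrix.of fun a b => (p.2 ⟨s + a, by omega⟩ ⟨s + b, by omega⟩).re + (p.2 ⟨s + a, by omega⟩ ⟨s + b, by omega⟩).imI,
    Matrix.of fun a b => if a ≤ b then (p.2 ⟨s + a, by omega⟩ ⟨s + b, by omega⟩).imJ else
      (p.2 ⟨s + a, by omega⟩ ⟨s + b, by omega⟩).imK,
    fun a => (p.2 ⟨s + a, by omega⟩ ⟨s + a, by omega⟩).imK)
  map_add' p q := by
    refine Prod.ext ?_ (Prod.ext ?_ (Prod.ext ?_ (Prod.ext ?_ ?_)))
    · ext a; simp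
    · ext a b; simp; ring
    · ext a b; simp; ring
    · ext a b; simp; split_ifs <;> rfl
    · ext a; simp
  map_smul' c p := by
    refine Prod.ext ?_ (Prod.ext ?_ (Prod.ext ?_ (Prod.ext ?_ ?_)))
    · ext a; simp
    · ext a b; simp; ring
    · ext a b; simp; ring
    · ext a b; simp
    · ext a; simp

lemma upper {m n s r e : ℕ} (hm : 0 < m) (hr : r ≤ m) (hs : s ≤ n) (hsr : s ≤ r) (hr2 : r ≤ 2 * s)
    (he : r ≤ 2 → e = 1) :
    Module.finrank ℝ (stabSub (AA m n s r)) ≤ e + (m - r) ^ 2 + (n - s) * (2 * (n - s) + 1) := by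
  have hinj : Function.Injective ((Phi s r e hm hr hs).domRestrict (stabSub (AA m n s r))) := by
    rw [injective_iff_map_eq_zero]
    rintro ⟨⟨X, Y⟩, hmem⟩ h
    have hmem' : (X, Y) ∈ stabSet8 (AA m n s r) := hmem
    have hst := hmem'
    obtain ⟨hX, hY, hXY⟩ := hst
    simp only at hX hY hXY
    have h' : Phi s r e hm hr hs (X, Y) = 0 := h
    have g1 := congrArg (fun p => p.1) h'
    have g2 := congrArg (fun p => p.2.1) h'
    have g3 := congrArg (fun p => p.2.2.1) h'
    have g4 := congrArg (fun p => p.2.2.2.1) h'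
    have g5 := congrArg (fun p => p.2.2.2.2) h'
    simp only [Phi, LinearMap.coe_mk, AddHom.coe_mk, Prod.fst_zero, Prod.snd_zero] at g1 g2 g3 g4 g5
    have hX0 : X = 0 := by
      ext1 a b
      by_cases hab : r ≤ (a : ℕ) ∧ r ≤ (b : ℕ)
      · have k1 := congrFun (congrFun g2 ⟨a - r, by omega⟩) ⟨b - r, by omega⟩
        have k2 := congrFun (congrFun g2 ⟨b - r, by omega⟩) ⟨a - r, by omega⟩
        have ea : (⟨r + (a - r), by omega⟩ : Fin m) = a := Fin.ext (by simp; omega)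
        have eb : (⟨r + (b - r), by omega⟩ : Fin m) = b := Fin.ext (by simp; omega)
        simp only [of_apply, ea, eb, Matrix.zero_apply] at k1 k2
        have hab' := congrFun (congrFun hX a) b
        have j1 := congrArg Complex.re hab'
        have j2 := congrArg Complex.im hab'
        simp at j1 j2
        apply Complex.ext
        · simp; linarith
        · simp; linarith
      · exact X_struct hs hr2 hr X Y hmem' hm (by
          intro h2
          obtain rfl := he h2
          exact congrFun g1 0) a b hab
    have hAY : AA m n s r * Y = 0 := by
      rw [← hXY, hX0]
      have : (0 : Matrix (Fin m) (Fin m) ℂ).map (Quaternion.coeComplex) = 0 := by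
        ext1 i j; simp
      rw [this, Matrix.zero_mul]
    have hrow := Y_struct hs hsr hr Y hAY
    have hY' : ∀ a b, star (Y b a) = - Y a b := fun a b => congrFun (congrFun hY a) b
    have hY0 : Y = 0 := by
      ext1 a b
      by_cases ha : (a : ℕ) < s
      · exact hrow a b ha
      by_cases hb : (b : ℕ) < s
      · have := hY' a b
        rw [hrow b a hb] at this
        simpa using this.symm
      have ea : (⟨s + (a - s), by omega⟩ : Fin n) = a := Fin.ext (by simp; omega)
      have eb : (⟨s + (b - s), by omega⟩ : Fin n) = b := Fin.ext (by simp; omega)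
      have k1 := congrFun (congrFun g3 ⟨a - s, by omega⟩) ⟨b - s, by omega⟩
      have k2 := congrFun (congrFun g3 ⟨b - s, by omega⟩) ⟨a - s, by omega⟩
      have k3 := congrFun (congrFun g4 ⟨a - s, by omega⟩) ⟨b - s, by omega⟩
      have k4 := congrFun (congrFun g4 ⟨b - s, by omega⟩) ⟨a - s, by omega⟩
      have k5 := congrFun g5 ⟨a - s, by omega⟩
      simp only [of_apply, ea, eb, Matrix.zero_apply, Pi.zero_apply, Fin.mk_le_mk] at k1 k2 k3 k4 k5
      have j1 := congrArg QuaternionAlgebra.re (hY' a b)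
      have j2 := congrArg QuaternionAlgebra.imI (hY' a b)
      have j3 := congrArg QuaternionAlgebra.imJ (hY' a b)
      have j4 := congrArg QuaternionAlgebra.imK (hY' a b)
      simp at j1 j2 j3 j4
      apply Quaternion.ext
      · simp; linarith
      · simp; linarith
      · simp
        by_cases hab : (a : ℕ) - s ≤ b - s
        · rw [if_pos hab] at k3; exact k3
        · rw [if_pos (by omega)] at k4; linarith
      · simp
        rcases lt_trichotomy (a : ℕ) b with hab | hab | hab
        · rw [if_neg (by omega)] at k4; linarith
        · obtain rfl := Fin.ext hab; exact k5
        · rw [if_neg (by omega)] at k3; exact k3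
    exact Subtype.ext (Prod.ext hX0 hY0)
  have := LinearMap.finrank_le_finrank_of_injective hinj
  refine this.trans (le_of_eq ?_)
  rw [Module.finrank_prod, Module.finrank_prod, finrank_SpC]
  simp [Module.finrank_matrix]; ring

theorem stmt8 (m n : ℕ) (hm : 1 ≤ m) (hn : 1 ≤ n) :
    IsLeast {d : ℕ | ∃ A : Matrix (Fin m) (Fin n) (Quaternion ℝ),
        d = Module.finrank ℝ (Submodule.span ℝ (stabSet8 A))}
      (if 2 ≤ n ∧ 2 * n ≤ m then (m - 2 * n) ^ 2
       else if 3 ≤ m ∧ m ≤ n then (n - m) * (2 * (n - m) + 1)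
       else if n = 1 ∧ 2 ≤ m then 1 + (m - 2) ^ 2
       else if m ≤ 2 ∧ m ≤ n then 1 + (n - m) * (2 * (n - m) + 1)
       else 0) := by
  have hval : (if 2 ≤ n ∧ 2 * n ≤ m then (m - 2 * n) ^ 2
       else if 3 ≤ m ∧ m ≤ n then (n - m) * (2 * (n - m) + 1)
       else if n = 1 ∧ 2 ≤ m then 1 + (m - 2) ^ 2
       else if m ≤ 2 ∧ m ≤ n then 1 + (n - m) * (2 * (n - m) + 1)
       else 0) = (if (m ≤ 2 ∧ m ≤ n) ∨ (n = 1 ∧ 2 ≤ m) then 1 else 0) + (m - 2 * n) ^ 2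
        + (n - m) * (2 * (n - m) + 1) := by
    split_ifs with h1 h2 h3 h4 h5 h6 h7 h8 h9 h10 <;> first | omega | skip
    · rw [show n - m = 0 by omega]; simp
    · rw [show m - 2 * n = 0 by omega]; simp
    · obtain rfl : n = 1 := by omega
      rw [show 1 - m = 0 by omega]; simp
    · rw [show m - 2 * n = 0 by omega]; simp
    · rw [show m - 2 * n = 0 by omega, show n - m = 0 by omega]; simp
  rw [hval]
  constructor
  · refine ⟨AA m n (min m n) (min m (2 * min m n)), ?_⟩
    rw [span_stab]
    apply le_antisymm
    · exact lower' hm hn _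
    · refine (upper (e := if (m ≤ 2 ∧ m ≤ n) ∨ (n = 1 ∧ 2 ≤ m) then 1 else 0)
        hm (by omega) (by omega) (by omega) (by omega) ?_).trans (le_of_eq ?_)
      · intro h; rw [if_pos (by omega)]
      · rw [show m - min m (2 * min m n) = m - 2 * n by omega, show n - min m n = n - m by omega]
  · rintro d ⟨A, rfl⟩
    rw [span_stab]
    exact lower' hm hn A
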